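/- Let H = {rrb, bbr, yyr} (the patterns: a triangle with two red edges and one blue edge, a triangle with two blue edges and one red edge, and a triangle with two yellow edges and one red edge). Then for every integer n ≥ 3, h_2(n, H) = ⌈n/2⌉. -/

import Mathlib

/-- The three edge colors: red, blue, yellow. -/
inductive Col : Type
  | r | b | y
  deriving DecidableEq

/-- A (symmetric) 3-edge-coloring of the complete graph `K_n` on vertex set `Fin n`. -/
structure Coloring (n : ℕ) where
  col : Fin n → Fin n → Col
  symm : ∀ i j, col i j = col j i

/-- The pattern (multiset of edge colors) of the triangle on vertices `u, v, w`. -/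
def triPattern {n : ℕ} (c : Coloring n) (u v w : Fin n) : Multiset Col :=
  {c.col u v, c.col v w, c.col u w}

/-- The coloring `c` contains the pattern `P`: some triangle has color multiset `P`. -/
def Contains {n : ℕ} (c : Coloring n) (P : Multiset Col) : Prop :=
  ∃ u v w : Fin n, u ≠ v ∧ v ≠ w ∧ u ≠ w ∧ triPattern c u v w = P

/-- The coloring `c` avoids every pattern in the family `H`. -/
def Avoids {n : ℕ} (c : Coloring n) (H : Set (Multiset Col)) : Prop :=
  ∀ P ∈ H, ¬ Contains c P

/-- A vertex set `S` is two-colored under `c`: the edges inside `S` use at most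
two of the three colors, i.e. some color is missing on the edges inside `S`. -/
def TwoColored {n : ℕ} (c : Coloring n) (S : Finset (Fin n)) : Prop :=
  ∃ x : Col, ∀ i ∈ S, ∀ j ∈ S, i ≠ j → c.col i j ≠ x

/-- `h2 c` is the maximum size of a vertex set whose induced edges use at most
two of the three colors. -/
noncomputable def h2 {n : ℕ} (c : Coloring n) : ℕ :=
  sSup {k | ∃ S : Finset (Fin n), TwoColored c S ∧ S.card = k}

/-- `h2n n H = min { h2 c : c a 3-edge-coloring of K_n avoiding all patterns in H }`. -/
noncomputable def h2n (n : ℕ) (H : Set (Multiset Col)) : ℕ :=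
  sInf {m | ∃ c : Coloring n, Avoids c H ∧ h2 c = m}

/-- Pattern abbreviations. -/
def Prrr : Multiset Col := {Col.r, Col.r, Col.r}
def Pbbb : Multiset Col := {Col.b, Col.b, Col.b}
def Pyyy : Multiset Col := {Col.y, Col.y, Col.y}
def Prrb : Multiset Col := {Col.r, Col.r, Col.b}
def Prry : Multiset Col := {Col.r, Col.r, Col.y}
def Pbbr : Multiset Col := {Col.b, Col.b, Col.r}
def Pbby : Multiset Col := {Col.b, Col.b, Col.y}
def Pyyr : Multiset Col := {Col.y, Col.y, Col.r}
def Pyyb : Multiset Col := {Col.y, Col.y, Col.b}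
def Prby : Multiset Col := {Col.r, Col.b, Col.y}

/-!
Call the graphs formed by the red, blue and yellow edges `R`, `B` and `Y`; then `h2 c` is the
largest of their three independence numbers.

Lower bound: one of `R` and `B` is bipartite. For a red edge `vw` and a vertex `u` off it, the
forbidden patterns leave only red-red, red-yellow and blue-yellow for the two edges from `u`. If
`R` has no triangle, exactly one of `v`, `w` therefore lies in the closed yellow neighborhood of
any given vertex, so this neighborhood and its complement are independent in `R`. If `R` has a
triangle, every vertex sees at least two of its vertices in red, so any two vertices have a common
red neighbor and, as red-red-blue is forbidden, there are no blue edges at all.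

Upper bound: for red pairs `{0, 1}, {2, 3}, …`, blue within each parity class and yellow elsewhere,
each of the three graphs has a partition of its vertices into at most `⌈n/2⌉` cliques.
-/

section IndependentSets

variable {V : Type*} {G : SimpleGraph V}

lemma card_le_mul_indepNum_of_colorable [Fintype V] {k : ℕ} (hG : G.Colorable k) :
    Fintype.card V ≤ k * G.indepNum := by
  classical
  obtain ⟨f⟩ := hG
  have card_fiber_le (a : Fin k) : (Finset.univ.filter (f · = a)).card ≤ G.indepNum :=
    SimpleGraph.IsIndepSet.card_le_indepNum (by
      rw [Finset.coe_filter_univ]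
      exact f.isIndepSet_colorClass a)
  calc Fintype.card V
      ≤ G.indepNum * (Finset.univ.image f).card :=
        Finset.card_le_mul_card_image _ _ fun a _ ↦ card_fiber_le a
    _ ≤ G.indepNum * k := Nat.mul_le_mul_left _ (card_finset_fin_le _)
    _ = k * G.indepNum := Nat.mul_comm _ _

lemma indepNum_le_of_fibers_cliques {k : ℕ} (f : V → ℕ) (f_lt : ∀ v, f v < k)
    (hf : ∀ u v, u ≠ v → f u = f v → G.Adj u v) : G.indepNum ≤ k := by
  obtain ⟨S, hS⟩ := G.exists_isNIndepSet_indepNum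
  have f_injOn : Set.InjOn f S := fun u hu v hv huv ↦ by
    by_contra hne
    exact hS.isIndepSet hu hv hne (hf u v hne huv)
  calc G.indepNum = S.card := hS.card_eq.symm
    _ ≤ (Finset.range k).card :=
      Finset.card_le_card_of_injOn f (fun v _ ↦ Finset.mem_coe.2 (Finset.mem_range.2 (f_lt v)))
        f_injOn
    _ = k := Finset.card_range k

end IndependentSets

namespace Coloring

variable {n : ℕ} (c : Coloring n)

/-- The graph formed by the edges of color `x`. Adjacency includes `u ≠ v` because the values of
`Coloring.col` on the diagonal are meaningless. -/
def colorGraph (x : Col) : SimpleGraph (Fin n) where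
  Adj u v := u ≠ v ∧ c.col u v = x
  symm := ⟨fun u v h ↦ ⟨h.1.symm, c.symm u v ▸ h.2⟩⟩
  loopless := ⟨fun _ h ↦ h.1 rfl⟩

variable {c}

lemma colorGraph_adj {x : Col} {u v : Fin n} :
    (c.colorGraph x).Adj u v ↔ u ≠ v ∧ c.col u v = x :=
  Iff.rfl

lemma eq_of_colorGraph_adj {x z : Col} {u v : Fin n} (hx : (c.colorGraph x).Adj u v)
    (hz : (c.colorGraph z).Adj u v) : x = z :=
  hx.2.symm.trans hz.2

lemma adj_red_or_blue_or_yellow {u v : Fin n} (huv : u ≠ v) :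
    (c.colorGraph .r).Adj u v ∨ (c.colorGraph .b).Adj u v ∨ (c.colorGraph .y).Adj u v := by
  cases h : c.col u v <;> simp [colorGraph_adj, huv, h]

end Coloring

section Invariants

variable {n : ℕ} {c : Coloring n}

lemma twoColored_iff_exists_isIndepSet {S : Finset (Fin n)} :
    TwoColored c S ↔ ∃ x, (c.colorGraph x).IsIndepSet S := by
  simp +contextual [TwoColored, SimpleGraph.isIndepSet_iff, Set.Pairwise, Coloring.colorGraph_adj]

lemma h2_le_iff {k : ℕ} : h2 c ≤ k ↔ ∀ x, (c.colorGraph x).indepNum ≤ k := by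
  have bddAbove : BddAbove {k | ∃ S : Finset (Fin n), TwoColored c S ∧ S.card = k} :=
    ⟨n, by rintro _ ⟨S, -, rfl⟩; exact card_finset_fin_le S⟩
  have nonempty : {k | ∃ S : Finset (Fin n), TwoColored c S ∧ S.card = k}.Nonempty :=
    ⟨0, ∅, ⟨.r, by simp⟩, rfl⟩
  rw [h2, csSup_le_iff bddAbove nonempty]
  constructor
  · intro h x
    obtain ⟨S, hS⟩ := (c.colorGraph x).exists_isNIndepSet_indepNum
    exact h _ ⟨S, twoColored_iff_exists_isIndepSet.2 ⟨x, hS.isIndepSet⟩, hS.card_eq⟩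
  · rintro h _ ⟨S, hS, rfl⟩
    obtain ⟨x, hx⟩ := twoColored_iff_exists_isIndepSet.1 hS
    exact hx.card_le_indepNum.trans (h x)

lemma contains_pair_iff {x z : Col} :
    Contains c {x, x, z} ↔ ∃ u v w, (c.colorGraph x).Adj u v ∧ (c.colorGraph x).Adj v w ∧
      (c.colorGraph z).Adj u w := by
  constructor
  · rintro ⟨u, v, w, huv, hvw, huw, h⟩
    have odd_edge : (c.col u v = x ∧ c.col v w = x ∧ c.col u w = z) ∨
        (c.col u v = x ∧ c.col v w = z ∧ c.col u w = x) ∨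
        (c.col u v = z ∧ c.col v w = x ∧ c.col u w = x) := by
      revert h
      unfold triPattern
      cases c.col u v <;> cases c.col v w <;> cases c.col u w <;> cases x <;> cases z <;> decide
    rcases odd_edge with ⟨huv', hvw', huw'⟩ | ⟨huv', hvw', huw'⟩ | ⟨huv', hvw', huw'⟩
    · exact ⟨u, v, w, ⟨huv, huv'⟩, ⟨hvw, hvw'⟩, huw, huw'⟩
    · exact ⟨v, u, w, .symm ⟨huv, huv'⟩, ⟨huw, huw'⟩, hvw, hvw'⟩
    · exact ⟨u, w, v, ⟨huw, huw'⟩, .symm ⟨hvw, hvw'⟩, huv, huv'⟩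
  · rintro ⟨u, v, w, huv, hvw, huw⟩
    exact ⟨u, v, w, huv.1, hvw.1, huw.1, by rw [triPattern, huv.2, hvw.2, huw.2]⟩

end Invariants

namespace Coloring

section LowerBound

variable {n : ℕ} {c : Coloring n} {u v w : Fin n}

lemma not_blue_of_red_of_red (hrrb : ¬ Contains c Prrb) (huv : (c.colorGraph .r).Adj u v)
    (hvw : (c.colorGraph .r).Adj v w) : ¬ (c.colorGraph .b).Adj u w :=
  fun huw ↦ hrrb (contains_pair_iff.2 ⟨u, v, w, huv, hvw, huw⟩)

lemma not_yellow_of_yellow_of_red (hyyr : ¬ Contains c Pyyr) (huv : (c.colorGraph .y).Adj u v)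
    (hvw : (c.colorGraph .r).Adj v w) : ¬ (c.colorGraph .y).Adj u w :=
  fun huw ↦ hyyr (contains_pair_iff.2 ⟨v, u, w, huv.symm, huw, hvw⟩)

lemma yellow_of_blue_of_red (hrrb : ¬ Contains c Prrb) (hbbr : ¬ Contains c Pbbr)
    (huv : (c.colorGraph .b).Adj u v) (hvw : (c.colorGraph .r).Adj v w) :
    (c.colorGraph .y).Adj u w := by
  have huw : u ≠ w := by
    rintro rfl
    exact Col.noConfusion (eq_of_colorGraph_adj huv hvw.symm)
  rcases adj_red_or_blue_or_yellow huw with red | blue | yellow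
  · exact absurd huv (not_blue_of_red_of_red hrrb red hvw.symm)
  · exact absurd (contains_pair_iff.2 ⟨v, u, w, huv.symm, blue, hvw⟩) hbbr
  · exact yellow

variable (hrrb : ¬ Contains c Prrb) (hbbr : ¬ Contains c Pbbr) (hyyr : ¬ Contains c Pyyr)
include hrrb hbbr hyyr

lemma not_blue_of_red_triangle {a b d : Fin n} (hab : (c.colorGraph .r).Adj a b)
    (had : (c.colorGraph .r).Adj a d) (hbd : (c.colorGraph .r).Adj b d) :
    ¬ (c.colorGraph .b).Adj u a := fun hua ↦
  not_yellow_of_yellow_of_red hyyr (yellow_of_blue_of_red hrrb hbbr hua hab) hbd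
    (yellow_of_blue_of_red hrrb hbbr hua had)

lemma red_or_red_of_red_triangle {a b d : Fin n} (hab : (c.colorGraph .r).Adj a b)
    (had : (c.colorGraph .r).Adj a d) (hbd : (c.colorGraph .r).Adj b d) :
    (c.colorGraph .r).Adj u a ∨ (c.colorGraph .r).Adj u b := by
  rcases eq_or_ne u a with rfl | hua
  · exact .inr hab
  rcases eq_or_ne u b with rfl | hub
  · exact .inl hab.symm
  have not_blue_a := not_blue_of_red_triangle (u := u) hrrb hbbr hyyr hab had hbd
  have not_blue_b := not_blue_of_red_triangle (u := u) hrrb hbbr hyyr hab.symm hbd had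
  have not_yellow_both := fun h ↦ not_yellow_of_yellow_of_red (u := u) hyyr h hab
  have color_a := adj_red_or_blue_or_yellow (c := c) hua
  have color_b := adj_red_or_blue_or_yellow (c := c) hub
  tauto

lemma colorGraph_blue_eq_bot_of_red_triangle (h : ¬ (c.colorGraph .r).CliqueFree 3) :
    c.colorGraph .b = ⊥ := by
  simp only [SimpleGraph.CliqueFree, not_forall, not_not] at h
  obtain ⟨_, h⟩ := h
  obtain ⟨a, b, d, hab, had, hbd, rfl⟩ := SimpleGraph.is3Clique_iff.1 h
  refine SimpleGraph.eq_bot_iff_forall_not_adj.2 fun u v huv ↦ ?_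
  have common_red_neighbor : ∃ t, (c.colorGraph .r).Adj u t ∧ (c.colorGraph .r).Adj v t := by
    have red_ab (x : Fin n) := red_or_red_of_red_triangle (u := x) hrrb hbbr hyyr hab had hbd
    have red_ad (x : Fin n) := red_or_red_of_red_triangle (u := x) hrrb hbbr hyyr had hab hbd.symm
    have red_bd (x : Fin n) :=
      red_or_red_of_red_triangle (u := x) hrrb hbbr hyyr hbd hab.symm had.symm
    grind only [red_ab u, red_ab v, red_ad u, red_ad v, red_bd u, red_bd v]
  obtain ⟨t, hut, hvt⟩ := common_red_neighbor
  exact not_blue_of_red_of_red hrrb hut hvt.symm huv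

lemma mem_insert_yellow_neighborSet_iff_of_red (h : (c.colorGraph .r).CliqueFree 3)
    (hvw : (c.colorGraph .r).Adj v w) :
    v ∈ insert u ((c.colorGraph .y).neighborSet u) ↔
      w ∉ insert u ((c.colorGraph .y).neighborSet u) := by
  simp only [Set.mem_insert_iff, SimpleGraph.mem_neighborSet]
  constructor
  · rintro (rfl | huv) (rfl | huw)
    · exact hvw.ne rfl
    · exact Col.noConfusion (eq_of_colorGraph_adj hvw huw)
    · exact Col.noConfusion (eq_of_colorGraph_adj hvw.symm huv)
    · exact not_yellow_of_yellow_of_red hyyr huv hvw huw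
  · contrapose!
    rintro ⟨hvu, not_yellow⟩
    rcases eq_or_ne w u with hwu | hwu
    · exact .inl hwu
    rcases adj_red_or_blue_or_yellow (c := c) hvu.symm with red | blue | yellow
    · rcases adj_red_or_blue_or_yellow (c := c) hwu.symm with red' | blue' | yellow'
      · exact absurd (SimpleGraph.is3Clique_triple_iff.2 ⟨red, red', hvw⟩) (h {u, v, w})
      · exact absurd blue' (not_blue_of_red_of_red hrrb red hvw)
      · exact .inr yellow'
    · exact .inr (yellow_of_blue_of_red hrrb hbbr blue hvw)
    · exact absurd yellow not_yellow

lemma colorGraph_red_colorable_two (h : (c.colorGraph .r).CliqueFree 3) :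
    (c.colorGraph .r).Colorable 2 := by
  rcases isEmpty_or_nonempty (Fin n) with _ | ⟨⟨u⟩⟩
  · exact .of_isEmpty _
  let f : (c.colorGraph .r).Coloring Prop :=
    .mk (· ∈ insert u ((c.colorGraph .y).neighborSet u)) fun hvw heq ↦
      iff_not_self (heq.to_iff.symm.trans
        (mem_insert_yellow_neighborSet_iff_of_red hrrb hbbr hyyr h hvw))
  simpa only [Fintype.card_prop] using f.colorable

lemma exists_colorGraph_colorable_two : ∃ x, (c.colorGraph x).Colorable 2 := by
  by_cases h : (c.colorGraph .r).CliqueFree 3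
  · exact ⟨.r, colorGraph_red_colorable_two hrrb hbbr hyyr h⟩
  · refine ⟨.b, ?_⟩
    rw [colorGraph_blue_eq_bot_of_red_triangle hrrb hbbr hyyr h]
    exact ⟨fun _ ↦ 0, by simp⟩

lemma le_two_mul_h2 : n ≤ 2 * h2 c := by
  obtain ⟨x, hx⟩ := exists_colorGraph_colorable_two hrrb hbbr hyyr
  calc n = Fintype.card (Fin n) := (Fintype.card_fin n).symm
    _ ≤ 2 * (c.colorGraph x).indepNum := card_le_mul_indepNum_of_colorable hx
    _ ≤ 2 * h2 c := Nat.mul_le_mul_left 2 (h2_le_iff.1 le_rfl x)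

end LowerBound

end Coloring

/-- The extremal coloring: red joins the pairs `{0, 1}, {2, 3}, …`, and otherwise an edge is blue
if its ends have the same parity and yellow if not. -/
def pairedColoring (n : ℕ) : Coloring n where
  col i j := if i.val / 2 = j.val / 2 then .r else if i.val % 2 = j.val % 2 then .b else .y
  symm i j := by simp only [eq_comm]

section PairedColoring

variable {n : ℕ}

lemma pairedColoring_red_adj {i j : Fin n} :
    ((pairedColoring n).colorGraph .r).Adj i j ↔ i ≠ j ∧ i.val / 2 = j.val / 2 := by
  grind [Coloring.colorGraph_adj, pairedColoring]

lemma pairedColoring_blue_adj {i j : Fin n} :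
    ((pairedColoring n).colorGraph .b).Adj i j ↔ i ≠ j ∧ i.val % 2 = j.val % 2 := by
  grind [Coloring.colorGraph_adj, pairedColoring]

lemma pairedColoring_yellow_adj {i j : Fin n} :
    ((pairedColoring n).colorGraph .y).Adj i j ↔
      i.val / 2 ≠ j.val / 2 ∧ i.val % 2 ≠ j.val % 2 := by
  grind [Coloring.colorGraph_adj, pairedColoring]

lemma avoids_pairedColoring : Avoids (pairedColoring n) {Prrb, Pbbr, Pyyr} := by
  have eq_of_div_eq_of_mod_eq {u w : Fin n} (hdiv : u.val / 2 = w.val / 2)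
      (hmod : u.val % 2 = w.val % 2) : u = w := Fin.ext (Nat.ext_div_mod hdiv hmod)
  rintro P (rfl | rfl | rfl) hP <;> obtain ⟨u, v, w, huv, hvw, huw⟩ := contains_pair_iff.1 hP <;>
    refine huw.ne ?_ <;>
    simp only [pairedColoring_red_adj, pairedColoring_blue_adj, pairedColoring_yellow_adj]
      at huv hvw huw
  · exact eq_of_div_eq_of_mod_eq (huv.2.trans hvw.2) huw.2
  · exact eq_of_div_eq_of_mod_eq huw.2 (huv.2.trans hvw.2)
  · have same_parity : u.val % 2 = w.val % 2 := by omega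
    exact eq_of_div_eq_of_mod_eq huw.2 same_parity

lemma indepNum_pairedColoring_red_le :
    ((pairedColoring n).colorGraph .r).indepNum ≤ (n + 1) / 2 :=
  indepNum_le_of_fibers_cliques (fun i ↦ i.val / 2) (fun i ↦ by omega)
    fun i j hij h ↦ pairedColoring_red_adj.2 ⟨hij, h⟩

lemma indepNum_pairedColoring_blue_le_two :
    ((pairedColoring n).colorGraph .b).indepNum ≤ 2 :=
  indepNum_le_of_fibers_cliques (fun i ↦ i.val % 2) (fun i ↦ by omega)
    fun i j hij h ↦ pairedColoring_blue_adj.2 ⟨hij, h⟩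

lemma indepNum_pairedColoring_yellow_le (hn : 3 ≤ n) :
    ((pairedColoring n).colorGraph .y).indepNum ≤ (n + 1) / 2 := by
  -- The fibers are `{1, 2}, {3, 4}, …` and `{0}`, or `{n - 1, 0}` instead of `{0}` if `n` is even.
  refine indepNum_le_of_fibers_cliques
    (fun i ↦ if (i.val + 1) / 2 < (n + 1) / 2 then (i.val + 1) / 2 else 0) (fun i ↦ by grind)
    fun i j hij h ↦ pairedColoring_yellow_adj.2 ?_
  grind

lemma h2_pairedColoring_le (hn : 3 ≤ n) : h2 (pairedColoring n) ≤ (n + 1) / 2 := by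
  refine h2_le_iff.2 fun x ↦ ?_
  cases x with
  | r => exact indepNum_pairedColoring_red_le
  | b => exact indepNum_pairedColoring_blue_le_two.trans (by omega)
  | y => exact indepNum_pairedColoring_yellow_le hn

end PairedColoring

theorem stmt8 (n : ℕ) (hn : 3 ≤ n) :
    h2n n {Prrb, Pbbr, Pyyr} = (n + 1) / 2 := by
  have lower (c : Coloring n) (hc : Avoids c {Prrb, Pbbr, Pyyr}) : (n + 1) / 2 ≤ h2 c := by
    have n_le : n ≤ 2 * h2 c :=
      Coloring.le_two_mul_h2 (hc Prrb (by simp)) (hc Pbbr (by simp)) (hc Pyyr (by simp))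
    omega
  refine IsLeast.csInf_eq ⟨⟨pairedColoring n, avoids_pairedColoring, ?_⟩, ?_⟩
  · exact (h2_pairedColoring_le hn).antisymm (lower _ avoids_pairedColoring)
  · rintro _ ⟨c, hc, rfl⟩
    exact lower c hc
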